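/- arXiv:2502.14591 — 4 statements merged into one kernel-verified Lean document; each statement's English description precedes it below -/
import Mathlib

section
/- Let T ∈ ℝ^{n×n×r} be a third-order tensor. The block circulant unfolding ψ(T) ∈ ℝ^{nr×nr} is invertible if and only if every Fourier block T̂_j ∈ ℂ^{n×n}, j = 0,…,r−1, is invertible; and in that case the inverse matrix ψ(T)^{−1} is itself block circulant, i.e., there exists a tensor T^{−1} ∈ ℝ^{n×n×r} with ψ(T^{−1}) = ψ(T)^{−1}. -/
open Matrix

def psiBC {r : ℕ} {ι κ : Type*} (T : Fin r → Matrix ι κ ℝ) :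
    Matrix (Fin r × ι) (Fin r × κ) ℝ :=
  fun p q => T (p.1 - q.1) p.2 q.2

noncomputable def fourierBlock {r : ℕ} {ι κ : Type*} (T : Fin r → Matrix ι κ ℝ) (j : Fin r) :
    Matrix ι κ ℂ :=
  ∑ k : Fin r,
    (Complex.exp (-(2 * Real.pi * Complex.I) / r)) ^ (j.val * k.val) • (T k).map Complex.ofReal

open Matrix Kronecker in
theorem psi_det_eq {n r : ℕ} [NeZero r] (T : Fin r → Matrix (Fin n) (Fin n) ℝ) :
    Complex.ofReal (psiBC T).det = ∏ j, (fourierBlock T j).det := by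
  set w : ℂ := Complex.exp (-(2 * Real.pi * Complex.I) / r) with hw
  have hprim : IsPrimitiveRoot w r := by
    have h := (Complex.isPrimitiveRoot_exp r (NeZero.ne r)).inv
    rw [← Complex.exp_neg] at h
    rw [hw, neg_div]
    exact h
  let W : Matrix (Fin r) (Fin r) ℂ := vandermonde (fun j : Fin r => w ^ (j : ℕ))
  have hW : W.det ≠ 0 := by
    rw [det_vandermonde_ne_zero_iff]
    intro a b hab
    exact Fin.ext (hprim.pow_inj a.2 b.2 hab)
  let F : Matrix (Fin r × Fin n) (Fin r × Fin n) ℂ := W ⊗ₖ (1 : Matrix (Fin n) (Fin n) ℂ)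
  have hF : F.det ≠ 0 := by
    simp only [F, det_kronecker, det_one, one_pow, mul_one]
    exact pow_ne_zero _ hW
  let D : Matrix (Fin r × Fin n) (Fin r × Fin n) ℂ :=
    (blockDiagonal (fourierBlock T)).submatrix (Equiv.prodComm _ _) (Equiv.prodComm _ _)
  have hD : D.det = ∏ j, (fourierBlock T j).det := by
    simp only [D]
    rw [det_submatrix_equiv_self, det_blockDiagonal]
  have hpow : ∀ j m k : Fin r, w ^ ((j : ℕ) * ((m + k : Fin r) : ℕ)) =
      w ^ ((j : ℕ) * m) * w ^ ((j : ℕ) * k) := by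
    intro j m k
    rw [← pow_add, ← mul_add, Fin.val_add, mul_comm, pow_mul, mul_comm (j : ℕ), pow_mul]
    congr 1
    exact (pow_eq_pow_mod _ hprim.pow_eq_one).symm
  have key : F * (psiBC T).map Complex.ofReal = D * F := by
    ext ⟨j, a⟩ ⟨k, b⟩
    have h1 : (F * (psiBC T).map Complex.ofReal) (j, a) (k, b) =
        ∑ l : Fin r, w ^ ((j : ℕ) * l) * (T (l - k) a b : ℂ) := by
      simp [Matrix.mul_apply, Fintype.sum_prod_type, F, W, psiBC, vandermonde_apply,
        Matrix.one_apply, pow_mul]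
    have h2 : (D * F) (j, a) (k, b) = fourierBlock T j a b * w ^ ((j : ℕ) * k) := by
      simp [Matrix.mul_apply, Fintype.sum_prod_type, F, W, D, vandermonde_apply,
        Matrix.one_apply, pow_mul, blockDiagonal_apply]
    rw [h1, h2, fourierBlock, ← hw, Matrix.sum_apply, Finset.sum_mul,
      ← Equiv.sum_comp (Equiv.addRight k)]
    refine Finset.sum_congr rfl fun m _ => ?_
    simp only [Equiv.coe_addRight, add_sub_cancel_right, hpow, Matrix.smul_apply,
      Matrix.map_apply, smul_eq_mul]
    ring
  have hdet := congrArg Matrix.det key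
  rw [det_mul, det_mul, mul_comm, hD] at hdet
  have := mul_right_cancel₀ hF hdet
  rw [← this]
  exact RingHom.map_det Complex.ofRealHom (psiBC T)

theorem psi_isUnit_iff_fourierBlocks_isUnit {n r : ℕ}
    (T : Fin r → Matrix (Fin n) (Fin n) ℝ) :
    (IsUnit (psiBC T) ↔ ∀ j : Fin r, IsUnit (fourierBlock T j)) ∧
      (IsUnit (psiBC T) →
        ∃ Tinv : Fin r → Matrix (Fin n) (Fin n) ℝ, psiBC Tinv = (psiBC T)⁻¹) := by
  rcases Nat.eq_zero_or_pos r with rfl | hr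
  · refine ⟨⟨fun _ j => j.elim0, fun _ => ?_⟩, fun _ => ⟨T, ?_⟩⟩
    · exact isUnit_of_subsingleton _
    · exact Subsingleton.elim _ _
  haveI : NeZero r := ⟨hr.ne'⟩
  refine ⟨?_, fun _ => ⟨fun k a b => (psiBC T)⁻¹ (k, a) (0, b), ?_⟩⟩
  · simp only [Matrix.isUnit_iff_isUnit_det, isUnit_iff_ne_zero]
    rw [← Complex.ofReal_ne_zero, psi_det_eq, Finset.prod_ne_zero_iff]
    simp
  · ext ⟨i, a⟩ ⟨j, b⟩
    let e : Fin r × Fin n ≃ Fin r × Fin n := (Equiv.addRight j).prodCongr (Equiv.refl _)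
    have h : (psiBC T).submatrix e e = psiBC T := by
      ext ⟨p, x⟩ ⟨q, y⟩
      simp [e, psiBC]
    have h2 := Matrix.inv_submatrix_equiv (psiBC T) e e
    rw [h] at h2
    change (psiBC T)⁻¹ (i - j, a) (0, b) = _
    conv_lhs => rw [h2]
    simp [e]
end

section
/- (Corollary 2) Suppose the consistent set Σ is nonempty. Then Σ is a singleton if and only if for every j = 0,…,r−1 the set of complex matrix pairs {(A,B) ∈ ℂ^{n×n} × ℂ^{n×m} : Ẑ_j = A Ŷ_j + B V̂_j} is a singleton, where Ŷ_j, Ẑ_j, V̂_j are the j-th Fourier blocks of the data tensors. -/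
/-!
STATEMENT 9 (Corollary 2): If the consistent set Σ is nonempty, then Σ is a singleton iff
for every `j` the set of complex pairs `(A,B)` with `Ẑ_j = A Ŷ_j + B V̂_j` is a singleton.
-/

open Matrix

def tProd {r : ℕ} {ι κ χ : Type*} [Fintype κ]
    (T : Fin r → Matrix ι κ ℝ) (S : Fin r → Matrix κ χ ℝ) :
    Fin r → Matrix ι χ ℝ :=
  fun k => ∑ j : Fin r, T (k - j) * S j

def consistentSet {n m q r : ℕ}
    (Y Z : Fin r → Matrix (Fin n) (Fin q) ℝ) (V : Fin r → Matrix (Fin m) (Fin q) ℝ) :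
    Set ((Fin r → Matrix (Fin n) (Fin n) ℝ) × (Fin r → Matrix (Fin n) (Fin m) ℝ)) :=
  {p | Z = tProd p.1 Y + tProd p.2 V}


lemma aux_pow_sub {r : ℕ} [NeZero r] (ζ : ℂ) (h : ζ ^ r = 1) (k l : Fin r) :
    ζ ^ (k - l).val * ζ ^ l.val = ζ ^ k.val := by
  have h1 : k.val = ((k - l).val + l.val) % r := by
    rw [← Fin.val_add, sub_add_cancel]
  rw [← pow_add, pow_eq_pow_mod ((k - l).val + l.val) h, ← h1]

lemma aux_prim {r : ℕ} [NeZero r] :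
    IsPrimitiveRoot (Complex.exp (-(2 * Real.pi * Complex.I) / r)) r := by
  have := (Complex.isPrimitiveRoot_exp r (NeZero.ne r)).inv
  rwa [← Complex.exp_neg, ← neg_div] at this

lemma aux_root {r : ℕ} [NeZero r] (j : Fin r) :
    ((Complex.exp (-(2 * Real.pi * Complex.I) / r)) ^ j.val) ^ r = 1 := by
  rw [← pow_mul, mul_comm j.val r, pow_mul, aux_prim.pow_eq_one, one_pow]

lemma aux_fb {r : ℕ} {ι κ : Type*} (T : Fin r → Matrix ι κ ℝ) (j : Fin r) :
    fourierBlock T j = ∑ k : Fin r,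
      ((Complex.exp (-(2 * Real.pi * Complex.I) / r)) ^ j.val) ^ k.val •
        (T k).map Complex.ofReal := by
  simp only [fourierBlock, pow_mul]

lemma aux_map_tProd {r : ℕ} {ι κ χ : Type*} [Fintype κ]
    (T : Fin r → Matrix ι κ ℝ) (S : Fin r → Matrix κ χ ℝ) (k : Fin r) :
    (tProd T S k).map Complex.ofReal =
      ∑ l, (T (k - l)).map Complex.ofReal * (S l).map Complex.ofReal := by
  ext a b
  simp [tProd, Matrix.sum_apply, Matrix.mul_apply]

lemma aux_fb_tProd {r : ℕ} [NeZero r] {ι κ χ : Type*} [Fintype κ]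
    (T : Fin r → Matrix ι κ ℝ) (S : Fin r → Matrix κ χ ℝ) (j : Fin r) :
    fourierBlock (tProd T S) j = fourierBlock T j * fourierBlock S j := by
  simp only [aux_fb]
  have hz := aux_root j
  generalize (Complex.exp (-(2 * Real.pi * Complex.I) / r)) ^ j.val = ζ at hz
  simp only [aux_map_tProd, Finset.smul_sum]
  rw [Finset.sum_comm, Matrix.mul_sum]
  refine Finset.sum_congr rfl fun l _ => ?_
  rw [← Equiv.sum_comp (Equiv.subRight l) (fun k => ζ ^ k.val • (T k).map Complex.ofReal),
    Matrix.sum_mul]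
  refine Finset.sum_congr rfl fun k _ => ?_
  rw [Matrix.smul_mul, Matrix.mul_smul, smul_smul, Equiv.subRight_apply, aux_pow_sub ζ hz]

lemma aux_fb_add {r : ℕ} {ι κ : Type*} (T S : Fin r → Matrix ι κ ℝ) (j : Fin r) :
    fourierBlock (T + S) j = fourierBlock T j + fourierBlock S j := by
  ext a b
  simp [fourierBlock, Matrix.sum_apply, mul_add, Finset.sum_add_distrib]

lemma aux_fb_inj {r : ℕ} [NeZero r] {ι κ : Type*} (T S : Fin r → Matrix ι κ ℝ)
    (h : ∀ j, fourierBlock T j = fourierBlock S j) : T = S := by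
  funext k
  ext a b
  set v : Fin r → ℂ := fun j => (Complex.exp (-(2 * Real.pi * Complex.I) / r)) ^ j.val with hv
  have hinj : Function.Injective v := fun i j hij =>
    Fin.ext (aux_prim.pow_inj i.2 j.2 hij)
  have hdet := Matrix.det_vandermonde_ne_zero_iff.mpr hinj
  have h0 := Matrix.eq_zero_of_mulVec_eq_zero hdet
    (v := fun k => ((T k a b : ℝ) : ℂ) - ((S k a b : ℝ) : ℂ)) (by
      funext j
      have := congrFun (congrFun (h j) a) b
      simp only [aux_fb, Matrix.sum_apply, Matrix.smul_apply, Matrix.map_apply, smul_eq_mul] at this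
      simp only [Matrix.mulVec, dotProduct, Matrix.vandermonde_apply, hv, mul_sub,
        Finset.sum_sub_distrib, Pi.zero_apply]
      rw [this, sub_self])
  have := congrFun h0 k
  simpa [sub_eq_zero] using this

/-- real tensor with slices `Re (ζ^{-k} M)` -/
noncomputable def auxLift (r : ℕ) {ι κ : Type*} (ζ : ℂ) (M : Matrix ι κ ℂ) :
    Fin r → Matrix ι κ ℝ :=
  fun k => (ζ⁻¹ ^ k.val • M).map Complex.re

lemma aux_lift_tProd {r : ℕ} [NeZero r] {ι κ χ : Type*} [Fintype κ] (ζ : ℂ) (hz : ζ ^ r = 1)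
    (M : Matrix ι κ ℂ) (S : Fin r → Matrix κ χ ℝ) (k : Fin r) :
    tProd (auxLift r ζ M) S k =
      (ζ⁻¹ ^ k.val • (M * ∑ l : Fin r, ζ ^ l.val • (S l).map Complex.ofReal)).map Complex.re := by
  have hz0 : ζ ≠ 0 := by
    rintro rfl
    simp [zero_pow (NeZero.ne r)] at hz
  have hzi : ζ⁻¹ ^ r = 1 := by rw [inv_pow, hz, inv_one]
  have key : ∀ l : Fin r, ζ⁻¹ ^ (k - l).val = ζ⁻¹ ^ k.val * ζ ^ l.val := fun l => by
    rw [← aux_pow_sub ζ⁻¹ hzi k l, mul_assoc, ← mul_pow, inv_mul_cancel₀ hz0, one_pow, mul_one]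
  rw [Matrix.mul_sum, Finset.smul_sum]
  ext a b
  simp only [tProd, Matrix.sum_apply, Matrix.map_apply, Complex.re_sum]
  refine Finset.sum_congr rfl fun l _ => ?_
  rw [Matrix.mul_smul, smul_smul, ← key l]
  simp only [auxLift, Matrix.mul_apply, Matrix.smul_apply, Matrix.map_apply, smul_eq_mul,
    Finset.mul_sum, Complex.re_sum]
  refine Finset.sum_congr rfl fun c _ => ?_
  rw [← mul_assoc, Complex.re_mul_ofReal]

lemma aux_ker {n m q r : ℕ} [NeZero r]
    (Y Z : Fin r → Matrix (Fin n) (Fin q) ℝ) (V : Fin r → Matrix (Fin m) (Fin q) ℝ)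
    (h : ∃! p, p ∈ consistentSet Y Z V) (j : Fin r)
    (M : Matrix (Fin n) (Fin n) ℂ) (N : Matrix (Fin n) (Fin m) ℂ)
    (hMN : M * fourierBlock Y j + N * fourierBlock V j = 0) :
    M.map Complex.re = 0 ∧ N.map Complex.re = 0 := by
  obtain ⟨p, hp, hu⟩ := h
  have hz := aux_root j
  simp only [aux_fb] at hMN
  generalize (Complex.exp (-(2 * Real.pi * Complex.I) / r)) ^ j.val = ζ at hz hMN
  have h0 : tProd (auxLift r ζ M) Y + tProd (auxLift r ζ N) V = 0 := by
    funext k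
    rw [Pi.add_apply, aux_lift_tProd ζ hz, aux_lift_tProd ζ hz, Pi.zero_apply]
    rw [← Matrix.map_add Complex.re Complex.add_re, ← smul_add, hMN]
    ext a b
    simp
  have hadd : ∀ {κ : Type} [Fintype κ] (A B : Fin r → Matrix (Fin n) κ ℝ)
      (S : Fin r → Matrix κ (Fin q) ℝ), tProd (A + B) S = tProd A S + tProd B S := by
    intro κ _ A B S
    funext k
    simp [tProd, Matrix.add_mul, Finset.sum_add_distrib]
  have h1 := hu (p.1 + auxLift r ζ M, p.2 + auxLift r ζ N) (by
    have hp' : Z = tProd p.1 Y + tProd p.2 V := hp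
    change Z = tProd (p.1 + auxLift r ζ M) Y + tProd (p.2 + auxLift r ζ N) V
    rw [hadd, hadd, add_add_add_comm, h0, add_zero]
    exact hp')
  have hA : auxLift r ζ M = 0 := by simpa using congrArg Prod.fst h1
  have hB : auxLift r ζ N = 0 := by simpa using congrArg Prod.snd h1
  constructor
  · simpa [auxLift] using congrFun hA 0
  · simpa [auxLift] using congrFun hB 0

lemma aux_zero {ι κ : Type*} (M : Matrix ι κ ℂ) (h1 : M.map Complex.re = 0)
    (h2 : (Complex.I • M).map Complex.re = 0) : M = 0 := by
  ext a b
  have e1 := congrFun (congrFun h1 a) b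
  have e2 := congrFun (congrFun h2 a) b
  apply Complex.ext
  · simpa using e1
  · simpa using e2

theorem informative_sysId_iff_fourier_sysId {n m q r : ℕ}
    (Y Z : Fin r → Matrix (Fin n) (Fin q) ℝ) (V : Fin r → Matrix (Fin m) (Fin q) ℝ)
    (hne : (consistentSet Y Z V).Nonempty) :
    (∃! p, p ∈ consistentSet Y Z V) ↔
      ∀ j : Fin r,
        ∃! p : Matrix (Fin n) (Fin n) ℂ × Matrix (Fin n) (Fin m) ℂ,
          fourierBlock Z j = p.1 * fourierBlock Y j + p.2 * fourierBlock V j := by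
  rcases Nat.eq_zero_or_pos r with rfl | hr
  · refine ⟨fun _ j => j.elim0, fun _ => ?_⟩
    obtain ⟨p, hp⟩ := hne
    exact ⟨p, hp, fun p' _ => Subsingleton.elim _ _⟩
  have : NeZero r := ⟨hr.ne'⟩
  have hF : ∀ p ∈ consistentSet Y Z V, ∀ j, fourierBlock Z j =
      fourierBlock p.1 j * fourierBlock Y j + fourierBlock p.2 j * fourierBlock V j := by
    intro p hp j
    have hp' : Z = tProd p.1 Y + tProd p.2 V := hp
    rw [← aux_fb_tProd, ← aux_fb_tProd, ← aux_fb_add, ← hp']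
  obtain ⟨p, hp⟩ := hne
  constructor
  · intro h j
    refine ⟨(fourierBlock p.1 j, fourierBlock p.2 j), hF p hp j, ?_⟩
    rintro ⟨A, B⟩ hAB
    have e := hF p hp j
    have hk : (A - fourierBlock p.1 j) * fourierBlock Y j +
        (B - fourierBlock p.2 j) * fourierBlock V j = 0 := by
      have hAB' : fourierBlock Z j = A * fourierBlock Y j + B * fourierBlock V j := hAB
      rw [Matrix.sub_mul, Matrix.sub_mul, sub_add_sub_comm, ← e, ← hAB', sub_self]
    have k1 := aux_ker Y Z V h j _ _ hk
    have k2 := aux_ker Y Z V h j (Complex.I • (A - fourierBlock p.1 j))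
      (Complex.I • (B - fourierBlock p.2 j)) (by
        rw [Matrix.smul_mul, Matrix.smul_mul, ← smul_add, hk, smul_zero])
    exact Prod.ext (sub_eq_zero.mp (aux_zero _ k1.1 k2.1)) (sub_eq_zero.mp (aux_zero _ k1.2 k2.2))
  · intro h
    refine ⟨p, hp, fun p' hp' => ?_⟩
    have e : ∀ j, (fourierBlock p'.1 j, fourierBlock p'.2 j) =
        (fourierBlock p.1 j, fourierBlock p.2 j) := fun j =>
      (h j).unique (hF p' hp' j) (hF p hp j)
    exact Prod.ext (aux_fb_inj _ _ fun j => congrArg Prod.fst (e j))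
      (aux_fb_inj _ _ fun j => congrArg Prod.snd (e j))
end

section
/- Let T ∈ ℝ^{n×n×r} be a third-order tensor whose block circulant unfolding ψ(T) is symmetric. Then the following are equivalent: (i) for every nonzero X ∈ ℝ^{n×1×r}, the first frontal slice of Xᵀ⋆T⋆X is strictly positive (T is T-positive definite); (ii) the matrix ψ(T) ∈ ℝ^{nr×nr} is positive definite. -/
/-!
STATEMENT 16: For `T ∈ ℝ^{n×n×r}` with `ψ(T)` symmetric, T-positive definiteness
(the first frontal slice of `Xᵀ⋆T⋆X` is strictly positive for every nonzero
`X ∈ ℝ^{n×1×r}`) is equivalent to positive definiteness of the matrix `ψ(T)`.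
-/

open Matrix

/-- The T-transpose: `(Tᵀ)_0 = (T_0)ᵀ` and `(Tᵀ)_k = (T_{r−k})ᵀ`. -/
def tTr {r : ℕ} {ι κ : Type*} (T : Fin r → Matrix ι κ ℝ) :
    Fin r → Matrix κ ι ℝ :=
  fun k => (T (-k))ᵀ

theorem tProd_key {r n : ℕ} [NeZero r]
    (T : Fin r → Matrix (Fin n) (Fin n) ℝ) (X : Fin r → Matrix (Fin n) (Fin 1) ℝ) :
    (tProd (tTr X) (tProd T X)) 0 0 0 =
      (fun p : Fin r × Fin n => X p.1 p.2 0) ⬝ᵥ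
        (psiBC T *ᵥ (fun p : Fin r × Fin n => X p.1 p.2 0)) := by
  simp only [tProd, tTr, psiBC, dotProduct, mulVec, Fintype.sum_prod_type, Matrix.sum_apply,
    Matrix.mul_apply, Matrix.transpose_apply, zero_sub, neg_neg]

theorem tPosDef_iff_psi_posDef {r n : ℕ} [NeZero r]
    (T : Fin r → Matrix (Fin n) (Fin n) ℝ) (hsymm : (psiBC T).IsSymm) :
    (∀ X : Fin r → Matrix (Fin n) (Fin 1) ℝ, X ≠ 0 →
        0 < (tProd (tTr X) (tProd T X)) 0 0 0) ↔
      (psiBC T).PosDef := by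
  rw [Matrix.posDef_iff_dotProduct_mulVec]
  constructor
  · intro h
    refine ⟨?_, ?_⟩
    · rw [Matrix.IsHermitian, Matrix.conjTranspose_eq_transpose_of_trivial]
      exact hsymm
    · intro x hx
      have h1 := h (fun i => Matrix.of fun a _ => x (i, a)) (by
        intro h0
        apply hx
        funext p
        exact congrFun (congrFun (congrFun h0 p.1) p.2) 0)
      rw [tProd_key] at h1
      simpa using h1
  · rintro ⟨-, h⟩ X hX
    rw [tProd_key]
    have h1 := @h (fun p : Fin r × Fin n => X p.1 p.2 0) (by
      intro h0
      apply hX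
      funext i
      ext a b
      have h2 := congrFun h0 (i, a)
      rw [Subsingleton.elim b 0]
      exact h2)
    simpa using h1
end

section
/- (Proposition 3) Let A ∈ ℝ^{n×n×r}, B ∈ ℝ^{n×m×r}, and let Q = Qᵀ ∈ ℝ^{n×n×r} with ψ(Q) positive semidefinite and R = Rᵀ ∈ ℝ^{m×m×r} with ψ(R) positive definite. Assume the pair (A,B) is stabilizable (there exists a matrix K with spectral radius of ψ(A) − ψ(B)K strictly less than 1) and the pair (Q,A) is detectable (the pair (ψ(A)ᵀ, ψ(Q)ᵀ) is stabilizable). Then there exists a unique tensor P ∈ ℝ^{n×n×r} with ψ(P) symmetric positive semidefinite that solves the T-algebraic Riccati equation P = Aᵀ⋆P⋆A − Aᵀ⋆P⋆B⋆(R + Bᵀ⋆P⋆B)^{−1}⋆Bᵀ⋆P⋆A + Q, and the gain tensor K = (R + Bᵀ⋆P⋆B)^{−1}⋆Bᵀ⋆P⋆A is an optimal feedback gain: the closed loop ψ(A) − ψ(B)ψ(K) has spectral radius strictly less than 1, and for every initial state x₀ ∈ ℝ^{nr} and every gain tensor K' ∈ ℝ^{m×n×r} with spectral radius of ψ(A)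 − ψ(B)ψ(K') strictly less than 1, the quadratic cost satisfies J(x₀, K) ≤ J(x₀, K'). -/
/-!
STATEMENT 17 (Proposition 3): Under stabilizability of `(A,B)` and detectability of
`(Q,A)`, with `Q = Qᵀ`, `ψ(Q) ⪰ 0`, `R = Rᵀ`, `ψ(R) ≻ 0`, there exists a unique tensor
`P` with `ψ(P)` symmetric positive semidefinite solving the T-algebraic Riccati
equation, and the gain tensor `K = (R + Bᵀ⋆P⋆B)⁻¹⋆Bᵀ⋆P⋆A` is an optimal feedback gain.
-/

open Matrix

/-- Schur stability of a real matrix: spectral radius strictly less than 1. -/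
def StableR {N : Type*} [Fintype N] [DecidableEq N] (M : Matrix N N ℝ) : Prop :=
  ∀ μ ∈ spectrum ℂ (M.map Complex.ofReal), ‖μ‖ < 1

/-- The infinite-horizon quadratic cost `J(x₀, K)` of the closed loop
`x(t+1) = (A − B K) x(t)`, `u(t) = −K x(t)`. -/
noncomputable def lqCost {N M : Type*} [Fintype N] [Fintype M] [DecidableEq N]
    (Am : Matrix N N ℝ) (Bm : Matrix N M ℝ) (Qm : Matrix N N ℝ) (Rm : Matrix M M ℝ)
    (Km : Matrix M N ℝ) (x0 : N → ℝ) : ℝ :=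
  ∑' t : ℕ,
    ((((Am - Bm * Km) ^ t) *ᵥ x0) ⬝ᵥ (Qm *ᵥ (((Am - Bm * Km) ^ t) *ᵥ x0)) +
      (-(Km *ᵥ (((Am - Bm * Km) ^ t) *ᵥ x0))) ⬝ᵥ
        (Rm *ᵥ (-(Km *ᵥ (((Am - Bm * Km) ^ t) *ᵥ x0)))))

/-- `P` solves the T-algebraic Riccati equation
`P = Aᵀ⋆P⋆A − Aᵀ⋆P⋆B⋆(R + Bᵀ⋆P⋆B)⁻¹⋆Bᵀ⋆P⋆A + Q`, where the T-inverse is the tensor `W`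
with `ψ(W) = (ψ(R) + ψ(B)ᵀψ(P)ψ(B))⁻¹`. -/
def SolvesTARE {n m r : ℕ} (A : Fin r → Matrix (Fin n) (Fin n) ℝ)
    (B : Fin r → Matrix (Fin n) (Fin m) ℝ) (Q : Fin r → Matrix (Fin n) (Fin n) ℝ)
    (R : Fin r → Matrix (Fin m) (Fin m) ℝ) (P : Fin r → Matrix (Fin n) (Fin n) ℝ) : Prop :=
  ∃ W : Fin r → Matrix (Fin m) (Fin m) ℝ,
    psiBC W = (psiBC R + (psiBC B)ᵀ * psiBC P * psiBC B)⁻¹ ∧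
    P = tProd (tTr A) (tProd P A)
        - tProd (tTr A) (tProd P (tProd B (tProd W (tProd (tTr B) (tProd P A))))) + Q

/-- `K = (R + Bᵀ⋆P⋆B)⁻¹⋆Bᵀ⋆P⋆A` in the T-product sense. -/
def IsTQRGain {n m r : ℕ}
    (B : Fin r → Matrix (Fin n) (Fin m) ℝ) (R : Fin r → Matrix (Fin m) (Fin m) ℝ)
    (A P : Fin r → Matrix (Fin n) (Fin n) ℝ) (K : Fin r → Matrix (Fin m) (Fin n) ℝ) : Prop :=
  ∃ W : Fin r → Matrix (Fin m) (Fin m) ℝ,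
    psiBC W = (psiBC R + (psiBC B)ᵀ * psiBC P * psiBC B)⁻¹ ∧
    K = tProd W (tProd (tTr B) (tProd P A))

namespace TQR
open Filter Topology

section decay
attribute [local instance] Matrix.linftyOpNormedRing Matrix.linftyOpNormedAlgebra

lemma decay {N : Type*} [Fintype N] [DecidableEq N] (M : Matrix N N ℝ) (h : StableR M) :
    ∃ ρ : ℝ, 0 ≤ ρ ∧ ρ < 1 ∧ ∀ᶠ t : ℕ in atTop, ∀ i j, |(M ^ t) i j| ≤ ρ ^ t := by
  set C : Matrix N N ℂ := M.map Complex.ofReal with hC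
  have hsr : spectralRadius ℂ C < 1 := by
    rcases subsingleton_or_nontrivial (Matrix N N ℂ) with hs | hs
    · simp
    · have := spectrum.spectralRadius_lt_of_forall_lt C (r := 1) (fun z hz => by
        have := h z hz
        exact_mod_cast this)
      simpa using this
  obtain ⟨ρ, h1, h2⟩ := ENNReal.lt_iff_exists_nnreal_btwn.mp hsr
  refine ⟨ρ, ρ.2, by exact_mod_cast h2, ?_⟩
  have ht := spectrum.pow_nnnorm_pow_one_div_tendsto_nhds_spectralRadius C
  filter_upwards [ht.eventually (gt_mem_nhds h1), eventually_gt_atTop 0] with t ht h0 i j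
  have h3 : (‖C ^ t‖₊ : ENNReal) ≤ (ρ : ENNReal) ^ t := by
    have := ENNReal.rpow_le_rpow ht.le (z := (t : ℝ)) (by positivity)
    rw [← ENNReal.rpow_mul, one_div, inv_mul_cancel₀ (by positivity), ENNReal.rpow_one,
      ENNReal.rpow_natCast] at this
    exact this
  have h4 : ‖C ^ t‖ ≤ (ρ : ℝ) ^ t := by exact_mod_cast h3
  refine le_trans ?_ h4
  have h5 : (C ^ t) i j = (((M ^ t) i j : ℝ) : ℂ) := by
    have : C ^ t = (M ^ t).map Complex.ofReal :=
      (map_pow (Complex.ofRealHom.mapMatrix (m := N)) M t).symm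
    rw [this]; rfl
  have h6 : ‖(C ^ t) i j‖ ≤ ‖C ^ t‖ := by
    rw [Matrix.linfty_opNorm_def]
    have a1 : ‖(C ^ t) i j‖₊ ≤ ∑ j, ‖(C ^ t) i j‖₊ :=
      Finset.single_le_sum (f := fun j => ‖(C ^ t) i j‖₊) (fun _ _ => zero_le) (Finset.mem_univ j)
    have a2 := Finset.le_sup (f := fun i => ∑ j, ‖(C ^ t) i j‖₊) (Finset.mem_univ i)
    exact_mod_cast a1.trans a2
  rw [h5, Complex.norm_real, Real.norm_eq_abs] at h6
  exact h6
end decay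

lemma decay_vec {N : Type*} [Fintype N] [DecidableEq N] (M : Matrix N N ℝ) (h : StableR M) :
    ∃ ρ : ℝ, 0 ≤ ρ ∧ ρ < 1 ∧ ∀ x : N → ℝ, ∀ i,
      (fun t : ℕ => ((M ^ t) *ᵥ x) i) =O[atTop] (fun t : ℕ => ρ ^ t) := by
  obtain ⟨ρ, h0, h1, h2⟩ := decay M h
  refine ⟨ρ, h0, h1, fun x i => ?_⟩
  simp only [Matrix.mulVec, dotProduct]
  refine Asymptotics.IsBigO.fun_sum fun j _ => ?_
  refine Asymptotics.IsBigO.of_bound |x j| ?_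
  filter_upwards [h2] with t ht
  have := ht i j
  rw [Real.norm_eq_abs, Real.norm_eq_abs, abs_mul, abs_of_nonneg (pow_nonneg h0 t), mul_comm]
  gcongr

lemma decay_quad {N : Type*} [Fintype N] [DecidableEq N] (M : Matrix N N ℝ) (h : StableR M) :
    ∃ ρ : ℝ, 0 ≤ ρ ∧ ρ < 1 ∧ ∀ (G : Matrix N N ℝ) (x : N → ℝ),
      (fun t : ℕ => ((M ^ t) *ᵥ x) ⬝ᵥ (G *ᵥ ((M ^ t) *ᵥ x))) =O[atTop] (fun t : ℕ => ρ ^ t) := by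
  obtain ⟨ρ, h0, h1, h2⟩ := decay_vec M h
  refine ⟨ρ * ρ, by positivity, by nlinarith, fun G x => ?_⟩
  simp only [mul_pow]
  conv in _ ⬝ᵥ _ => rw [dotProduct]
  refine Asymptotics.IsBigO.fun_sum fun i _ => (h2 x i).mul ?_
  have e : ∀ t : ℕ, (G *ᵥ ((M ^ t) *ᵥ x)) i = ∑ j, G i j * ((M ^ t) *ᵥ x) j := fun t => rfl
  simp only [e]
  exact Asymptotics.IsBigO.fun_sum fun j _ => (h2 x j).const_mul_left _

lemma quad_summable {N : Type*} [Fintype N] [DecidableEq N] (M : Matrix N N ℝ) (h : StableR M)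
    (G : Matrix N N ℝ) (x : N → ℝ) :
    Summable (fun t : ℕ => ((M ^ t) *ᵥ x) ⬝ᵥ (G *ᵥ ((M ^ t) *ᵥ x))) := by
  obtain ⟨ρ, h0, h1, h2⟩ := decay_quad M h
  exact summable_of_isBigO_nat (summable_geometric_of_lt_one h0 h1) (h2 G x)

lemma stable_iff {N : Type*} [Fintype N] [DecidableEq N] (M : Matrix N N ℝ) :
    StableR M ↔ ∀ (s t : ℝ) (a b : N → ℝ), (a ≠ 0 ∨ b ≠ 0) →
      M *ᵥ a = s • a - t • b → M *ᵥ b = s • b + t • a → s ^ 2 + t ^ 2 < 1 := by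
  have key : ∀ (s t : ℝ) (v : N → ℂ), (M.map Complex.ofReal) *ᵥ v = (⟨s, t⟩ : ℂ) • v ↔
      (M *ᵥ (fun i => (v i).re) = s • (fun i => (v i).re) - t • (fun i => (v i).im) ∧
       M *ᵥ (fun i => (v i).im) = s • (fun i => (v i).im) + t • (fun i => (v i).re)) := by
    intro s t v
    simp only [funext_iff, ← forall_and, Complex.ext_iff]
    refine forall_congr' fun i => ?_
    simp [Matrix.mulVec, dotProduct, Complex.re_sum, Complex.im_sum]
  have spec : ∀ μ : ℂ, μ ∈ spectrum ℂ (M.map Complex.ofReal) ↔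
      ∃ v : N → ℂ, v ≠ 0 ∧ (M.map Complex.ofReal) *ᵥ v = μ • v := by
    intro μ
    rw [← Matrix.spectrum_toLin', ← Module.End.hasEigenvalue_iff_mem_spectrum]
    constructor
    · intro h
      obtain ⟨v, hv⟩ := h.exists_hasEigenvector
      exact ⟨v, hv.2, by simpa using hv.apply_eq_smul⟩
    · rintro ⟨v, h0, hv⟩
      exact Module.End.hasEigenvalue_of_hasEigenvector
        ⟨Module.End.mem_eigenspace_iff.mpr (by simpa using hv), h0⟩
  have nrm : ∀ s t : ℝ, ‖(⟨s, t⟩ : ℂ)‖ < 1 ↔ s ^ 2 + t ^ 2 < 1 := by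
    intro s t
    rw [← sq_lt_one_iff₀ (norm_nonneg _), Complex.sq_norm, Complex.normSq_mk]
    ring_nf
  constructor
  · intro h s t a b hab ha hb
    rw [← nrm]
    refine h _ ((spec _).2 ⟨fun i => ⟨a i, b i⟩, ?_, (key s t _).2 ⟨ha, hb⟩⟩)
    intro h0
    rcases hab with h1 | h1
    · exact h1 (funext fun i => by simpa using congrArg Complex.re (congrFun h0 i))
    · exact h1 (funext fun i => by simpa using congrArg Complex.im (congrFun h0 i))
  · rintro h ⟨s, t⟩ hμ
    obtain ⟨v, h0, hv⟩ := (spec _).1 hμ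
    obtain ⟨ha, hb⟩ := (key s t v).1 hv
    rw [nrm]
    refine h s t _ _ ?_ ha hb
    by_contra hc
    push Not at hc
    exact h0 (funext fun i => Complex.ext (congrFun hc.1 i) (congrFun hc.2 i))

lemma stable_transpose {N : Type*} [Fintype N] [DecidableEq N] (M : Matrix N N ℝ)
    (h : StableR Mᵀ) : StableR M := by
  intro μ hμ
  refine h μ ?_
  rw [spectrum.mem_iff] at hμ ⊢
  rw [← Matrix.isUnit_transpose]
  simpa [Matrix.transpose_sub, Matrix.transpose_map, Matrix.algebraMap_eq_diagonal] using hμ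

set_option linter.unusedSectionVars false
section lqr
variable {N M : Type*} [Fintype N] [Fintype M] [DecidableEq N] [DecidableEq M]

noncomputable def quad {N : Type*} [Fintype N] (P : Matrix N N ℝ) (x : N → ℝ) : ℝ := x ⬝ᵥ (P *ᵥ x)

noncomputable def SS (B : Matrix N M ℝ) (R : Matrix M M ℝ) (P : Matrix N N ℝ) : Matrix M M ℝ :=
  R + Bᵀ * P * B

noncomputable def gain (A : Matrix N N ℝ) (B : Matrix N M ℝ) (R : Matrix M M ℝ)
    (P : Matrix N N ℝ) : Matrix M N ℝ := (SS B R P)⁻¹ * (Bᵀ * (P * A))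

noncomputable def ric (A : Matrix N N ℝ) (B : Matrix N M ℝ) (Q : Matrix N N ℝ) (R : Matrix M M ℝ)
    (P : Matrix N N ℝ) : Matrix N N ℝ :=
  Aᵀ * (P * A) - Aᵀ * (P * (B * ((SS B R P)⁻¹ * (Bᵀ * (P * A))))) + Q

lemma quad_add (P P' : Matrix N N ℝ) (x : N → ℝ) : quad (P + P') x = quad P x + quad P' x := by
  simp [quad, Matrix.add_mulVec]

lemma quad_sub (P P' : Matrix N N ℝ) (x : N → ℝ) : quad (P - P') x = quad P x - quad P' x := by
  simp [quad, Matrix.sub_mulVec]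

lemma quad_conj (C : Matrix M N ℝ) (P : Matrix M M ℝ) (x : N → ℝ) :
    quad (Cᵀ * P * C) x = quad P (C *ᵥ x) := by
  simp [quad, ← Matrix.mulVec_mulVec, Matrix.dotProduct_mulVec, Matrix.vecMul_transpose]

lemma quad_nonneg {P : Matrix N N ℝ} (h : P.PosSemidef) (x : N → ℝ) : 0 ≤ quad P x := by
  simpa [quad] using h.dotProduct_mulVec_nonneg x

lemma symm_of {P : Matrix N N ℝ} (h : P.PosSemidef) : Pᵀ = P := by
  have := h.isHermitian
  simpa [Matrix.IsHermitian] using this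

lemma quad_zero {P : Matrix N N ℝ} (h : P.PosSemidef) {x : N → ℝ} (hx : quad P x = 0) :
    P *ᵥ x = 0 := (h.dotProduct_mulVec_zero_iff x).1 (by simpa [quad] using hx)

lemma polar {P : Matrix N N ℝ} (h : Pᵀ = P) (i j : N) :
    P i j = (quad P (Pi.single i 1 + Pi.single j 1) - quad P (Pi.single i 1)
      - quad P (Pi.single j 1)) / 2 := by
  have : P j i = P i j := by rw [← congrFun (congrFun h i) j]; rfl
  simp [quad, Matrix.mulVec_add, add_dotProduct, this]
  ring

lemma quad_ext {P P' : Matrix N N ℝ} (h : Pᵀ = P) (h' : P'ᵀ = P') (e : ∀ x, quad P x = quad P' x) :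
    P = P' := by
  ext i j
  rw [polar h, polar h']; simp [e]

lemma SS_posDef (B : Matrix N M ℝ) {R : Matrix M M ℝ} {P : Matrix N N ℝ} (hR : R.PosDef)
    (hP : P.PosSemidef) : (SS B R P).PosDef := by
  refine hR.add_posSemidef ?_
  have := hP.conjTranspose_mul_mul_same B
  simpa using this

lemma complete_square (A : Matrix N N ℝ) (B : Matrix N M ℝ) (Q : Matrix N N ℝ) {R : Matrix M M ℝ}
    {P : Matrix N N ℝ} (hR : R.PosDef) (hP : P.PosSemidef) (K' : Matrix M N ℝ) :
    (A - B * K')ᵀ * P * (A - B * K') + K'ᵀ * R * K' + Q =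
      ric A B Q R P + (K' - gain A B R P)ᵀ * SS B R P * (K' - gain A B R P) := by
  have hS := SS_posDef B hR hP
  have hSs := symm_of hS.posSemidef
  have hPs := symm_of hP
  have hu : IsUnit (SS B R P).det := (Matrix.isUnit_iff_isUnit_det _).1 hS.isUnit
  have hG : SS B R P * gain A B R P = Bᵀ * (P * A) := by
    rw [gain, ← Matrix.mul_assoc, Matrix.mul_nonsing_inv _ hu, Matrix.one_mul]
  have hGt : (gain A B R P)ᵀ * SS B R P = Aᵀ * (P * B) := by
    have := congrArg Matrix.transpose hG
    simpa [Matrix.transpose_mul, hSs, hPs, Matrix.mul_assoc] using this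
  have e1 : (K' - gain A B R P)ᵀ * SS B R P * (K' - gain A B R P)
      = K'ᵀ * SS B R P * K' - K'ᵀ * (Bᵀ * (P * A)) - Aᵀ * (P * B) * K'
        + Aᵀ * (P * B) * gain A B R P := by
    rw [← hG, Matrix.transpose_sub, Matrix.sub_mul, hGt]
    simp only [Matrix.mul_sub, Matrix.sub_mul, Matrix.mul_assoc]
    rw [hG]
    abel
  rw [e1]
  unfold ric
  rw [show (SS B R P)⁻¹ * (Bᵀ * (P * A)) = gain A B R P from rfl]
  simp only [SS, Matrix.transpose_sub, Matrix.transpose_mul, Matrix.mul_sub, Matrix.sub_mul,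
    Matrix.mul_add, Matrix.add_mul, Matrix.mul_assoc]
  abel

/-- stage cost -/
noncomputable def stage (Q : Matrix N N ℝ) (R : Matrix M M ℝ) (K : Matrix M N ℝ) (x : N → ℝ) : ℝ :=
  quad Q x + quad R (K *ᵥ x)

lemma step_eq (A : Matrix N N ℝ) (B : Matrix N M ℝ) (Q : Matrix N N ℝ) {R : Matrix M M ℝ}
    {P : Matrix N N ℝ} (hR : R.PosDef) (hP : P.PosSemidef) (K' : Matrix M N ℝ) (x : N → ℝ) :
    quad P ((A - B * K') *ᵥ x) + stage Q R K' x =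
      quad (ric A B Q R P) x + quad (SS B R P) ((K' - gain A B R P) *ᵥ x) := by
  have := congrArg (fun G => quad G x) (complete_square A B Q hR hP K')
  simp only [quad_add, quad_conj] at this
  rw [stage]; linarith

lemma step_gain (A : Matrix N N ℝ) (B : Matrix N M ℝ) (Q : Matrix N N ℝ) {R : Matrix M M ℝ}
    {P : Matrix N N ℝ} (hR : R.PosDef) (hP : P.PosSemidef) (x : N → ℝ) :
    quad (ric A B Q R P) x = 
      quad P ((A - B * gain A B R P) *ᵥ x) + stage Q R (gain A B R P) x := by
  rw [step_eq A B Q hR hP]; simp [quad]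

lemma step_le (A : Matrix N N ℝ) (B : Matrix N M ℝ) (Q : Matrix N N ℝ) {R : Matrix M M ℝ}
    {P : Matrix N N ℝ} (hR : R.PosDef) (hP : P.PosSemidef) (K' : Matrix M N ℝ) (x : N → ℝ) :
    quad (ric A B Q R P) x ≤ quad P ((A - B * K') *ᵥ x) + stage Q R K' x := by
  rw [step_eq A B Q hR hP]
  linarith [quad_nonneg (SS_posDef B hR hP).posSemidef ((K' - gain A B R P) *ᵥ x)]

lemma stage_nonneg {Q : Matrix N N ℝ} {R : Matrix M M ℝ} (hQ : Q.PosSemidef) (hR : R.PosDef)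
    (K : Matrix M N ℝ) (x : N → ℝ) : 0 ≤ stage Q R K x :=
  add_nonneg (quad_nonneg hQ _) (quad_nonneg hR.posSemidef _)

lemma ric_psd (A : Matrix N N ℝ) (B : Matrix N M ℝ) {Q : Matrix N N ℝ} {R : Matrix M M ℝ}
    {P : Matrix N N ℝ} (hQ : Q.PosSemidef) (hR : R.PosDef) (hP : P.PosSemidef) :
    (ric A B Q R P).PosSemidef := by
  have h := complete_square A B Q hR hP (gain A B R P)
  simp only [sub_self, Matrix.mul_zero, add_zero] at h
  rw [← h]
  refine Matrix.PosSemidef.add (Matrix.PosSemidef.add ?_ ?_) hQ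
  · simpa using hP.conjTranspose_mul_mul_same (A - B * gain A B R P)
  · simpa using hR.posSemidef.conjTranspose_mul_mul_same (gain A B R P)

lemma lqCost_eq (A : Matrix N N ℝ) (B : Matrix N M ℝ) (Q : Matrix N N ℝ) (R : Matrix M M ℝ)
    (K : Matrix M N ℝ) (x : N → ℝ) :
    lqCost A B Q R K x = ∑' t : ℕ, stage Q R K (((A - B * K) ^ t) *ᵥ x) := by
  simp [lqCost, stage, quad, Matrix.mulVec_neg]

lemma stage_summable {A : Matrix N N ℝ} {B : Matrix N M ℝ} (Q : Matrix N N ℝ) (R : Matrix M M ℝ)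
    {K : Matrix M N ℝ} (h : StableR (A - B * K)) (x : N → ℝ) :
    Summable (fun t : ℕ => stage Q R K (((A - B * K) ^ t) *ᵥ x)) := by
  have h1 : Summable (fun t : ℕ => quad Q (((A - B * K) ^ t) *ᵥ x)) := quad_summable _ h Q x
  have h2 : Summable (fun t : ℕ => quad (Kᵀ * R * K) (((A - B * K) ^ t) *ᵥ x)) :=
    quad_summable _ h (Kᵀ * R * K) x
  simp only [quad_conj] at h2
  exact h1.add h2

lemma pow_succ_mulVec (F : Matrix N N ℝ) (t : ℕ) (x : N → ℝ) :
    (F ^ (t + 1)) *ᵥ x = F *ᵥ ((F ^ t) *ᵥ x) := by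
  rw [pow_succ', Matrix.mulVec_mulVec]

lemma cost_lower {A : Matrix N N ℝ} {B : Matrix N M ℝ} {Q : Matrix N N ℝ} {R : Matrix M M ℝ}
    {P : Matrix N N ℝ} (hR : R.PosDef) (hP : P.PosSemidef) (hE : ric A B Q R P = P)
    {K : Matrix M N ℝ} (h : StableR (A - B * K)) (x : N → ℝ) :
    quad P x ≤ lqCost A B Q R K x := by
  rw [lqCost_eq]
  have h1 : ∀ T : ℕ, quad P x - quad P (((A - B * K) ^ T) *ᵥ x) ≤
      ∑ t ∈ Finset.range T, stage Q R K (((A - B * K) ^ t) *ᵥ x) := by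
    intro T
    induction T with
    | zero => simp
    | succ T ih =>
      rw [Finset.sum_range_succ, pow_succ_mulVec]
      have := step_le A B Q hR hP K (((A - B * K) ^ T) *ᵥ x)
      rw [hE] at this
      linarith
  have h2 := (stage_summable Q R h x).hasSum.tendsto_sum_nat
  have h3 : Tendsto (fun T : ℕ => quad P x - quad P (((A - B * K) ^ T) *ᵥ x)) atTop
      (𝓝 (quad P x - 0)) :=
    tendsto_const_nhds.sub (quad_summable _ h P x).tendsto_atTop_zero
  rw [sub_zero] at h3
  exact le_of_tendsto_of_tendsto' h3 h2 h1

lemma cost_upper {A : Matrix N N ℝ} {B : Matrix N M ℝ} {Q : Matrix N N ℝ} {R : Matrix M M ℝ}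
    {P : Matrix N N ℝ} (hQ : Q.PosSemidef) (hR : R.PosDef) (hP : P.PosSemidef)
    (hE : ric A B Q R P = P) (x : N → ℝ) :
    lqCost A B Q R (gain A B R P) x ≤ quad P x := by
  rw [lqCost_eq]
  refine Real.tsum_le_of_sum_range_le (fun t => stage_nonneg hQ hR _ _) fun T => ?_
  have h1 : ∑ t ∈ Finset.range T, stage Q R (gain A B R P) (((A - B * gain A B R P) ^ t) *ᵥ x)
      = quad P x - quad P (((A - B * gain A B R P) ^ T) *ᵥ x) := by
    induction T with
    | zero => simp
    | succ T ih =>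
      rw [Finset.sum_range_succ, pow_succ_mulVec, ih]
      have := step_gain A B Q hR hP (((A - B * gain A B R P) ^ T) *ᵥ x)
      rw [hE] at this
      linarith
  rw [h1]
  linarith [quad_nonneg hP (((A - B * gain A B R P) ^ T) *ᵥ x)]

lemma gain_stable {A : Matrix N N ℝ} {B : Matrix N M ℝ} {Q : Matrix N N ℝ} {R : Matrix M M ℝ}
    {P : Matrix N N ℝ} (hQ : Q.PosSemidef) (hR : R.PosDef) (hP : P.PosSemidef)
    (hE : ric A B Q R P = P) (hDet : ∃ L : Matrix N N ℝ, StableR (Aᵀ - Qᵀ * L)) :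
    StableR (A - B * gain A B R P) := by
  obtain ⟨L, hL⟩ := hDet
  have hL' : StableR (A - Lᵀ * Q) := by
    apply stable_transpose
    simpa [Matrix.transpose_sub, Matrix.transpose_mul] using hL
  rw [stable_iff] at hL' ⊢
  intro s t a b hab ha hb
  by_contra hc
  push Not at hc
  have ea := step_gain A B Q hR hP a
  have eb := step_gain A B Q hR hP b
  rw [hE] at ea eb
  have hq : quad P (s • a - t • b) + quad P (s • b + t • a)
      = (s ^ 2 + t ^ 2) * (quad P a + quad P b) := by
    simp only [quad, Matrix.mulVec_add, Matrix.mulVec_sub, Matrix.mulVec_smul, sub_dotProduct,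
      add_dotProduct, dotProduct_sub, dotProduct_add, smul_dotProduct, dotProduct_smul, smul_eq_mul]
    ring
  rw [← ha, ← hb] at hq
  have na := quad_nonneg hP a
  have nb := quad_nonneg hP b
  have q1 := quad_nonneg hQ a
  have q2 := quad_nonneg hQ b
  have r1 := quad_nonneg hR.posSemidef (gain A B R P *ᵥ a)
  have r2 := quad_nonneg hR.posSemidef (gain A B R P *ᵥ b)
  have hm : (quad P a + quad P b) ≤ (s ^ 2 + t ^ 2) * (quad P a + quad P b) :=
    le_mul_of_one_le_left (by positivity) hc
  simp only [stage] at ea eb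
  have Qa := quad_zero hQ (x := a) (by linarith)
  have Qb := quad_zero hQ (x := b) (by linarith)
  have aux : ∀ v : M → ℝ, quad R v = 0 → v = 0 := by
    intro v hv
    by_contra h0
    have := hR.dotProduct_mulVec_pos h0
    simp only [quad] at hv
    simp [hv] at this
  have Ka := aux _ (show quad R (gain A B R P *ᵥ a) = 0 by linarith)
  have Kb := aux _ (show quad R (gain A B R P *ᵥ b) = 0 by linarith)
  have := hL' s t a b hab
    (by rw [← ha]; simp [Matrix.sub_mulVec, ← Matrix.mulVec_mulVec, Qa, Ka])
    (by rw [← hb]; simp [Matrix.sub_mulVec, ← Matrix.mulVec_mulVec, Qb, Kb])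
  linarith

lemma ric_unique {A : Matrix N N ℝ} {B : Matrix N M ℝ} {Q : Matrix N N ℝ} {R : Matrix M M ℝ}
    {P P' : Matrix N N ℝ} (hQ : Q.PosSemidef) (hR : R.PosDef) (hP : P.PosSemidef)
    (hE : ric A B Q R P = P) (hP' : P'.PosSemidef) (hE' : ric A B Q R P' = P')
    (hDet : ∃ L : Matrix N N ℝ, StableR (Aᵀ - Qᵀ * L)) : P = P' := by
  refine quad_ext (symm_of hP) (symm_of hP') fun x => le_antisymm ?_ ?_
  · exact (cost_lower hR hP hE (gain_stable hQ hR hP' hE' hDet) x).trans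
      (cost_upper hQ hR hP' hE' x)
  · exact (cost_lower hR hP' hE' (gain_stable hQ hR hP hE hDet) x).trans
      (cost_upper hQ hR hP hE x)

lemma ric_exists {A : Matrix N N ℝ} {B : Matrix N M ℝ} {Q : Matrix N N ℝ} {R : Matrix M M ℝ}
    (hQ : Q.PosSemidef) (hR : R.PosDef) (hStab : ∃ K : Matrix M N ℝ, StableR (A - B * K)) :
    ∃ P : Matrix N N ℝ, P.PosSemidef ∧ ric A B Q R P = P := by
  obtain ⟨K, hK⟩ := hStab
  let p : ℕ → Matrix N N ℝ := fun k => (ric A B Q R)^[k] 0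
  have p0 : p 0 = 0 := rfl
  have ps : ∀ k, p (k + 1) = ric A B Q R (p k) := fun k => Function.iterate_succ_apply' _ _ _
  have hp : ∀ k, (p k).PosSemidef := by
    intro k
    induction k with
    | zero => exact Matrix.PosSemidef.zero
    | succ k ih => rw [ps]; exact ric_psd A B hQ hR ih
  have mono1 : ∀ k x, quad (p k) x ≤ quad (p (k + 1)) x := by
    intro k
    induction k with
    | zero => intro x; rw [p0]; simpa [quad] using quad_nonneg (hp 1) x
    | succ k ih =>
      intro x
      rw [ps (k + 1), step_gain A B Q hR (hp (k + 1)) x]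
      have h1 := step_le A B Q hR (hp k) (gain A B R (p (k + 1))) x
      rw [← ps] at h1
      linarith [ih ((A - B * gain A B R (p (k + 1))) *ᵥ x)]
  have bnd : ∀ k x, quad (p k) x ≤ lqCost A B Q R K x := by
    have h1 : ∀ k x, quad (p k) x ≤
        ∑ t ∈ Finset.range k, stage Q R K (((A - B * K) ^ t) *ᵥ x) := by
      intro k
      induction k with
      | zero => intro x; simp [p0, quad]
      | succ k ih =>
        intro x
        have h1 := step_le A B Q hR (hp k) K x
        rw [← ps] at h1
        have h2 := ih ((A - B * K) *ᵥ x)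
        simp only [Matrix.mulVec_mulVec, ← pow_succ] at h2
        rw [Finset.sum_range_succ']
        simp only [pow_zero, Matrix.one_mulVec]
        linarith
    intro k x
    rw [lqCost_eq]
    exact (h1 k x).trans ((stage_summable Q R hK x).sum_le_tsum _
      (fun t _ => stage_nonneg hQ hR _ _))
  have lim : ∀ x, ∃ l, Tendsto (fun k => quad (p k) x) atTop (𝓝 l) := fun x =>
    ⟨_, tendsto_atTop_ciSup (monotone_nat_of_le_succ fun k => mono1 k x)
      ⟨lqCost A B Q R K x, by rintro _ ⟨k, rfl⟩; exact bnd k x⟩⟩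
  choose l hl using lim
  let P : Matrix N N ℝ := fun i j =>
    (l (Pi.single i 1 + Pi.single j 1) - l (Pi.single i 1) - l (Pi.single j 1)) / 2
  have hlim : Tendsto p atTop (𝓝 P) := by
    refine tendsto_pi_nhds.2 fun i => tendsto_pi_nhds.2 fun j => ?_
    have : (fun k => p k i j) = fun k => (quad (p k) (Pi.single i 1 + Pi.single j 1)
        - quad (p k) (Pi.single i 1) - quad (p k) (Pi.single j 1)) / 2 := by
      funext k; exact polar (symm_of (hp k)) i j
    rw [this]
    exact (((hl _).sub (hl _)).sub (hl _)).div_const 2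
  have hquad : ∀ x, Tendsto (fun k => quad (p k) x) atTop (𝓝 (quad P x)) := by
    intro x
    have : Continuous fun G : Matrix N N ℝ => quad G x := by
      unfold quad
      exact continuous_const.dotProduct (continuous_id.matrix_mulVec continuous_const)
    exact (this.tendsto P).comp hlim
  have hPs : P.IsHermitian := by
    have h1 : Tendsto (fun k => (p k)ᵀ) atTop (𝓝 Pᵀ) :=
      ((continuous_id.matrix_transpose).tendsto P).comp hlim
    simp only [fun k => symm_of (hp k)] at h1
    have := tendsto_nhds_unique h1 hlim
    simpa [Matrix.IsHermitian] using this
  have hP : P.PosSemidef := by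
    refine Matrix.PosSemidef.of_dotProduct_mulVec_nonneg hPs fun x => ?_
    have := ge_of_tendsto' (hquad x) (fun k => quad_nonneg (hp k) x)
    simpa [quad] using this
  refine ⟨P, hP, ?_⟩
  have hS := SS_posDef B hR hP
  have hu : IsUnit (SS B R P).det := (Matrix.isUnit_iff_isUnit_det _).1 hS.isUnit
  have hSc : Continuous (SS B R) := by unfold SS; fun_prop
  have hinv : Tendsto (fun k => (SS B R (p k))⁻¹) atTop (𝓝 (SS B R P)⁻¹) := by
    have h1 : ContinuousAt Inv.inv (SS B R P) := continuousAt_matrix_inv _ (by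
      have := NormedRing.inverse_continuousAt hu.unit
      simpa using this)
    exact h1.tendsto.comp ((hSc.tendsto P).comp hlim)
  clear_value P p
  have hric : Tendsto (fun k => ric A B Q R (p k)) atTop (𝓝 (ric A B Q R P)) := by
    have hc : Continuous (fun z : Matrix N N ℝ × Matrix M M ℝ =>
        Aᵀ * (z.1 * A) - Aᵀ * (z.1 * (B * (z.2 * (Bᵀ * (z.1 * A))))) + Q) := by fun_prop
    have h2 := (hc.tendsto (P, (SS B R P)⁻¹)).comp (hlim.prodMk_nhds hinv)
    simp only [Function.comp_def] at h2
    unfold ric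
    exact h2
  simp only [← ps] at hric
  exact tendsto_nhds_unique hric (hlim.comp (tendsto_add_atTop_nat 1))

end lqr

section psi
variable {r : ℕ} {ι κ χ : Type*} [Fintype ι] [Fintype κ] [Fintype χ]

lemma psi_inj {T S : Fin r → Matrix ι κ ℝ} (h : psiBC T = psiBC S) : T = S := by
  cases r with
  | zero => funext k; exact k.elim0
  | succ r =>
    funext k; ext i j
    have := congrFun (congrFun h (k, i)) (0, j)
    simpa [psiBC] using this

lemma psi_add (T S : Fin r → Matrix ι κ ℝ) : psiBC (T + S) = psiBC T + psiBC S := rfl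
lemma psi_sub (T S : Fin r → Matrix ι κ ℝ) : psiBC (T - S) = psiBC T - psiBC S := rfl

lemma psi_tr (T : Fin r → Matrix ι κ ℝ) : psiBC (tTr T) = (psiBC T)ᵀ := by
  cases r with
  | zero => ext p; exact p.1.elim0
  | succ r =>
    ext p q
    simp [psiBC, tTr]

lemma psi_mul (T : Fin r → Matrix ι κ ℝ) (S : Fin r → Matrix κ χ ℝ) :
    psiBC (tProd T S) = psiBC T * psiBC S := by
  cases r with
  | zero => ext p; exact p.1.elim0
  | succ r =>
    ext p q
    simp only [psiBC, tProd, Matrix.mul_apply, Matrix.sum_apply, Fintype.sum_prod_type]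
    rw [← Equiv.sum_comp (Equiv.subRight q.1)]
    simp

/-- shift equivalence -/
def sh (r : ℕ) (ι : Type*) (s : Fin (r + 1)) : Fin (r + 1) × ι ≃ Fin (r + 1) × ι :=
  (Equiv.addRight s).prodCongr (Equiv.refl ι)

lemma psi_sh (T : Fin (r + 1) → Matrix ι κ ℝ) (s : Fin (r + 1)) :
    (psiBC T).submatrix (sh r ι s) (sh r κ s) = psiBC T := by
  ext p q
  simp [psiBC, sh]

lemma psi_of_sh {G : Matrix (Fin (r + 1) × ι) (Fin (r + 1) × κ) ℝ}
    (h : ∀ s, G.submatrix (sh r ι s) (sh r κ s) = G) : ∃ T, psiBC T = G := by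
  refine ⟨fun k i j => G (k, i) (0, j), ?_⟩
  ext p q
  have := congrFun (congrFun (h q.1) (p.1 - q.1, p.2)) (0, q.2)
  simp [sh] at this
  simp [psiBC, this]

end psi

lemma exists_psi_inv {r : ℕ} {ι : Type*} [Fintype ι] [DecidableEq ι] (T : Fin r → Matrix ι ι ℝ) :
    ∃ W, psiBC W = (psiBC T)⁻¹ := by
  cases r with
  | zero => exact ⟨T, by ext p; exact p.1.elim0⟩
  | succ r =>
    refine psi_of_sh fun s => ?_
    rw [← Matrix.inv_submatrix_equiv, psi_sh]

section bridge
variable {n m r : ℕ} (A Q : Fin r → Matrix (Fin n) (Fin n) ℝ)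
    (B : Fin r → Matrix (Fin n) (Fin m) ℝ) (R : Fin r → Matrix (Fin m) (Fin m) ℝ)

lemma solves_iff (P : Fin r → Matrix (Fin n) (Fin n) ℝ) :
    SolvesTARE A B Q R P ↔
      ric (psiBC A) (psiBC B) (psiBC Q) (psiBC R) (psiBC P) = psiBC P := by
  have key : ∀ W : Fin r → Matrix (Fin m) (Fin m) ℝ,
      psiBC W = (psiBC R + (psiBC B)ᵀ * psiBC P * psiBC B)⁻¹ →
      psiBC (tProd (tTr A) (tProd P A)
        - tProd (tTr A) (tProd P (tProd B (tProd W (tProd (tTr B) (tProd P A))))) + Q) =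
      ric (psiBC A) (psiBC B) (psiBC Q) (psiBC R) (psiBC P) := by
    intro W hW
    simp only [psi_add, psi_sub, psi_mul, psi_tr, hW, ric, SS]
  constructor
  · rintro ⟨W, hW, hP⟩
    rw [← key W hW, ← hP]
  · intro h
    obtain ⟨W, hW⟩ := exists_psi_inv (R + tProd (tProd (tTr B) P) B)
    simp only [psi_add, psi_mul, psi_tr] at hW
    exact ⟨W, hW, psi_inj (by rw [key W hW, h])⟩

lemma gain_eq {P : Fin r → Matrix (Fin n) (Fin n) ℝ} {K : Fin r → Matrix (Fin m) (Fin n) ℝ}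
    (h : IsTQRGain B R A P K) : psiBC K = gain (psiBC A) (psiBC B) (psiBC R) (psiBC P) := by
  obtain ⟨W, hW, rfl⟩ := h
  simp only [psi_mul, psi_tr, hW, gain, SS]

lemma ric_reindex {N N' M M' : Type*} [Fintype N] [Fintype M] [Fintype N'] [Fintype M']
    [DecidableEq M] [DecidableEq M'] (e : N' ≃ N) (f : M' ≃ M)
    (A : Matrix N N ℝ) (B : Matrix N M ℝ) (Q : Matrix N N ℝ) (R : Matrix M M ℝ)
    (P : Matrix N N ℝ) :
    (ric A B Q R P).submatrix e e = ric (A.submatrix e e) (B.submatrix e f) (Q.submatrix e e)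
      (R.submatrix f f) (P.submatrix e e) := by
  have hadd : ∀ (X Y : Matrix N N ℝ),
      X.submatrix e e + Y.submatrix e e = (X + Y).submatrix e e := fun _ _ => rfl
  have hadd' : ∀ (X Y : Matrix M M ℝ),
      X.submatrix f f + Y.submatrix f f = (X + Y).submatrix f f := fun _ _ => rfl
  have hsub : ∀ (X Y : Matrix N N ℝ),
      X.submatrix e e - Y.submatrix e e = (X - Y).submatrix e e := fun _ _ => rfl
  simp only [ric, SS, Matrix.transpose_submatrix, Matrix.submatrix_mul_equiv, hadd', hsub, hadd,
    Matrix.inv_submatrix_equiv]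

end bridge
end TQR

theorem tqr_existence_and_optimality {n m r : ℕ}
    (A Q : Fin r → Matrix (Fin n) (Fin n) ℝ)
    (B : Fin r → Matrix (Fin n) (Fin m) ℝ) (R : Fin r → Matrix (Fin m) (Fin m) ℝ)
    (hQsymm : tTr Q = Q) (hQ : (psiBC Q).PosSemidef)
    (hRsymm : tTr R = R) (hR : (psiBC R).PosDef)
    (hStab : ∃ K : Matrix (Fin r × Fin m) (Fin r × Fin n) ℝ,
      StableR (psiBC A - psiBC B * K))
    (hDet : ∃ L : Matrix (Fin r × Fin n) (Fin r × Fin n) ℝ,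
      StableR ((psiBC A)ᵀ - (psiBC Q)ᵀ * L)) :
    (∃! P : Fin r → Matrix (Fin n) (Fin n) ℝ,
        (psiBC P).PosSemidef ∧ SolvesTARE A B Q R P) ∧
    (∀ P : Fin r → Matrix (Fin n) (Fin n) ℝ,
      (psiBC P).PosSemidef → SolvesTARE A B Q R P →
      ∀ K : Fin r → Matrix (Fin m) (Fin n) ℝ, IsTQRGain B R A P K →
        StableR (psiBC A - psiBC B * psiBC K) ∧
        ∀ (x0 : Fin r × Fin n → ℝ) (K' : Fin r → Matrix (Fin m) (Fin n) ℝ),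
          StableR (psiBC A - psiBC B * psiBC K') →
          lqCost (psiBC A) (psiBC B) (psiBC Q) (psiBC R) (psiBC K) x0 ≤
            lqCost (psiBC A) (psiBC B) (psiBC Q) (psiBC R) (psiBC K') x0) := by
  have hS := hStab
  obtain ⟨P₀, hP₀, hE₀⟩ := TQR.ric_exists hQ hR hStab
  obtain ⟨P, hP⟩ : ∃ P : Fin r → Matrix (Fin n) (Fin n) ℝ, psiBC P = P₀ := by
    cases r with
    | zero => exact ⟨0, by ext p; exact p.1.elim0⟩
    | succ r =>
      refine TQR.psi_of_sh fun s => ?_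
      refine TQR.ric_unique hQ hR (hP₀.submatrix _) ?_ hP₀ hE₀ hDet
      have h := TQR.ric_reindex (TQR.sh r (Fin n) s) (TQR.sh r (Fin m) s)
        (psiBC A) (psiBC B) (psiBC Q) (psiBC R) P₀
      rw [hE₀] at h
      simp only [TQR.psi_sh] at h
      exact h.symm
  subst hP
  refine ⟨⟨P, ⟨hP₀, (TQR.solves_iff A Q B R P).2 hE₀⟩, ?_⟩, ?_⟩
  · rintro P' ⟨h1, h2⟩
    exact TQR.psi_inj (TQR.ric_unique hQ hR h1 ((TQR.solves_iff A Q B R P').1 h2) hP₀ hE₀ hDet)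
  · intro P' h1 h2 K hK
    have h2' := (TQR.solves_iff A Q B R P').1 h2
    rw [TQR.gain_eq A B R hK]
    refine ⟨TQR.gain_stable hQ hR h1 h2' hDet, fun x0 K' hK' => ?_⟩
    exact (TQR.cost_upper hQ hR h1 h2' x0).trans (TQR.cost_lower hR h1 h2' hK' x0)
end
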